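/- arXiv:1908.06885 — 2 statements merged into one kernel-verified Lean document; each statement's English description precedes it below -/
import Mathlib

section
/- Let ℓ ≥ 2, let A be an essential hyperplane arrangement in K^ℓ, let H ∈ A, and suppose A' = A \ {H} is also essential. If |A| − |A^H| > r(A), then r(A) = r(A'); likewise, if |A'| − |A^H| > r(A'), then r(A) = r(A'). -/
open Classical MvPolynomial

variable {K : Type*} [Field K] [CharZero K] {ℓ : ℕ}

/-- A (central) hyperplane arrangement: a finite set of nonzero linear forms,
pairwise non-proportional. -/
def IsArrangement (A : Finset (MvPolynomial (Fin ℓ) K)) : Prop :=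
  (∀ α ∈ A, α ≠ 0 ∧ α.IsHomogeneous 1) ∧
    ∀ α ∈ A, ∀ β ∈ A, α ≠ β → ∀ c : K, α ≠ c • β

/-- The arrangement is essential: the common zero set of its forms is `{0}`. -/
def IsEssential (A : Finset (MvPolynomial (Fin ℓ) K)) : Prop :=
  ∀ v : Fin ℓ → K, (∀ α ∈ A, eval v α = 0) → v = 0

/-- The defining polynomial `Q(A)`. -/
noncomputable def Qpoly (A : Finset (MvPolynomial (Fin ℓ) K)) : MvPolynomial (Fin ℓ) K :=
  ∏ α ∈ A, α

/-- Apply a derivation `θ = Σ θ_j ∂_j` to a polynomial. -/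
noncomputable def applyDer (θ : Fin ℓ → MvPolynomial (Fin ℓ) K)
    (f : MvPolynomial (Fin ℓ) K) : MvPolynomial (Fin ℓ) K :=
  ∑ j, θ j * pderiv j f

/-- The minimal degree of a Jacobian relation `r(A)`. -/
noncomputable def mdr (A : Finset (MvPolynomial (Fin ℓ) K)) : ℕ :=
  sInf {r | ∃ θ : Fin ℓ → MvPolynomial (Fin ℓ) K, θ ≠ 0 ∧
    (∀ j, (θ j).IsHomogeneous r) ∧ applyDer θ (Qpoly A) = 0}

/-- The number of elements `|A^H|` of the restriction of `A` to `H`: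
the number of distinct subspaces `H ∩ ker α_L`, `L ∈ A \ {H}`. -/
noncomputable def restCard (A : Finset (MvPolynomial (Fin ℓ) K))
    (H : MvPolynomial (Fin ℓ) K) : ℕ :=
  ((A.erase H).image fun L => {v : Fin ℓ → K | eval v H = 0 ∧ eval v L = 0}).card

/-!
Write `A' = A \ {H}` and call a derivation `D` logarithmic for `A` if `α ∣ D α` for all `α ∈ A`.
By the Leibniz rule a derivation killing `Q(A)` is logarithmic, and conversely a logarithmic
derivation kills `Q(A)` after subtracting a multiple of the Euler derivation. Hence `r(A)` is the
least degree of a logarithmic derivation that is not a multiple of the Euler derivation, and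
`r(A') ≤ r(A)` because a derivation logarithmic for `A` is so for `A'`.

For the reverse inequality, let `D` be logarithmic for `A'`. If `M₁, …, Mₘ ∈ A'` are all the forms
with a given trace on `H`, then each of them divides `M₁ * D H - H * D M₁`; restricting to `H` and
cancelling `M₁` shows that `D H` restricted to `H` is divisible by the `(m - 1)`-st power of the
restriction of `M₁`. Over all traces these powers multiply up to degree `|A'| - |A^H|`, so if `D`
has smaller degree then `D H` vanishes on `H`, which makes `D` logarithmic for `A`.
-/

section HomogeneousPolynomials

variable {σ R : Type*} [CommRing R]

theorem exists_eq_C_mul_of_associated [IsReduced R] {p q : MvPolynomial σ R}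
    (h : Associated p q) : ∃ c : R, q = C c * p := by
  obtain ⟨u, rfl⟩ := h
  obtain ⟨c, -, hu⟩ := isUnit_iff_eq_C_of_isReduced.1 u.isUnit
  exact ⟨c, by rw [hu, mul_comm]⟩

variable [IsDomain R]

theorem isHomogeneous_of_mul_left {p q : MvPolynomial σ R} {m n : ℕ} (hp : p.IsHomogeneous m)
    (hp0 : p ≠ 0) (hpq : (p * q).IsHomogeneous (m + n)) : q.IsHomogeneous n := by
  let _ := gradedAlgebra (σ := σ) (R := R)
  have hcomponent := DirectSum.coe_decompose_mul_add_of_left_mem (homogeneousSubmodule σ R)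
    (j := n) (b := q) hp
  rw [DirectSum.decompose_of_mem_same _ hpq] at hcomponent
  rw [mul_left_cancel₀ hp0 hcomponent]
  exact (DirectSum.decompose (homogeneousSubmodule σ R) q n).2

theorem isHomogeneous_mul_of_isHomogeneous_mul {p q x : MvPolynomial σ R} {m n : ℕ}
    (hp : p.IsHomogeneous m) (hp0 : p ≠ 0) (hx : x.IsHomogeneous m)
    (hpq : (p * q).IsHomogeneous n) : (q * x).IsHomogeneous n := by
  refine isHomogeneous_of_mul_left hp hp0 ?_
  rw [← mul_assoc, add_comm]
  exact hpq.mul hx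

theorem eq_zero_of_dvd_of_degree_lt {p q : MvPolynomial σ R} {m n : ℕ} (hp : p.IsHomogeneous m)
    (hq : q.IsHomogeneous n) (hpq : p ∣ q) (hlt : n < m) : q = 0 := by
  by_contra hq0
  have hdegree := totalDegree_le_of_dvd_of_isDomain hpq hq0
  rw [hp.totalDegree (ne_zero_of_dvd_ne_zero hq0 hpq), hq.totalDegree hq0] at hdegree
  exact hdegree.not_gt hlt

theorem exists_eval_ne_zero_of_linear {L : MvPolynomial σ R} (hL : L.IsHomogeneous 1)
    (hL0 : L ≠ 0) : ∃ v, eval v L ≠ 0 := by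
  contrapose! hL0
  refine hL.eq_zero_of_forall_eval_eq_zero_of_le_card hL0 ?_
  simpa using Cardinal.one_le_iff_ne_zero.2 (Cardinal.mk_ne_zero R)

end HomogeneousPolynomials

section LinearForms

variable {σ k : Type*} [Field k] {H L M : MvPolynomial σ k}

theorem irreducible_of_linear (hL : L.IsHomogeneous 1) (hL0 : L ≠ 0) : Irreducible L := by
  refine irreducible_of_totalDegree_eq_one (hL.totalDegree hL0) fun c hc => ?_
  obtain ⟨m, hm⟩ := ne_zero_iff.1 hL0
  exact isUnit_iff_ne_zero.2 (ne_zero_of_dvd_ne_zero hm (hc m))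

theorem isRelPrime_of_not_associated_of_linear (hL : L.IsHomogeneous 1) (hL0 : L ≠ 0)
    (hM : M.IsHomogeneous 1) (hM0 : M ≠ 0) (h : ¬Associated L M) : IsRelPrime L M := by
  have hL' := irreducible_of_linear hL hL0
  rw [hL'.isRelPrime_iff_not_dvd,
    hL'.dvd_irreducible_iff_associated (irreducible_of_linear hM hM0)]
  exact h

/-- Restriction of polynomials to the hyperplane `ker H`, for a linear form `H` not vanishing at
`v`: the pullback along the projection of the space onto `ker H` in the direction of `v`. Its values
are again polynomials in all the variables, so that no coordinates on `ker H` are needed. -/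
noncomputable def restrictAlong (H : MvPolynomial σ k) (v : σ → k) :
    MvPolynomial σ k →ₐ[k] MvPolynomial σ k :=
  aeval fun j => X j - C (v j / eval v H) * H

theorem restrictAlong_of_linear (v : σ → k) (hL : L.IsHomogeneous 1) :
    restrictAlong H v L = L - C (eval v L / eval v H) * H := by
  rw [← mem_homogeneousSubmodule, homogeneousSubmodule_one_eq_span_X] at hL
  induction hL using Submodule.span_induction with
  | mem p hp => obtain ⟨j, rfl⟩ := hp; simp [restrictAlong]
  | zero => simp
  | add p q _ _ hp hq => simp only [map_add, hp, hq, add_div]; ring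
  | smul c p _ hp =>
    rw [map_smul, hp, smul_eval, mul_div_assoc, C_mul]
    simp only [smul_eq_C_mul]
    ring

theorem restrictAlong_self {v : σ → k} (hH : H.IsHomogeneous 1) (hv : eval v H ≠ 0) :
    restrictAlong H v H = 0 := by
  simp [restrictAlong_of_linear v hH, div_self hv]

theorem dvd_sub_restrictAlong (H : MvPolynomial σ k) (v : σ → k) (p : MvPolynomial σ k) :
    H ∣ p - restrictAlong H v p := by
  induction p using MvPolynomial.induction_on with
  | C c => simp [restrictAlong]
  | add p q hp hq => rw [map_add, add_sub_add_comm]; exact dvd_add hp hq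
  | mul_X p j hp =>
    have hX : restrictAlong H v (X j) = X j - C (v j / eval v H) * H := aeval_X _ j
    rw [map_mul, hX, mul_sub, sub_sub_eq_add_sub, add_sub_right_comm, ← sub_mul]
    exact dvd_add (hp.mul_right _) (Dvd.intro_left _ (mul_assoc _ _ _))

theorem restrictAlong_eq_zero_iff {v : σ → k} (hH : H.IsHomogeneous 1) (hv : eval v H ≠ 0)
    {p : MvPolynomial σ k} : restrictAlong H v p = 0 ↔ H ∣ p := by
  refine ⟨fun h => by simpa [h] using dvd_sub_restrictAlong H v p, ?_⟩
  rintro ⟨q, rfl⟩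
  rw [map_mul, restrictAlong_self hH hv, zero_mul]

theorem isHomogeneous_restrictAlong (hH : H.IsHomogeneous 1) (v : σ → k) {p : MvPolynomial σ k}
    {n : ℕ} (hp : p.IsHomogeneous n) : (restrictAlong H v p).IsHomogeneous n := by
  have h := hp.aeval _ fun j => (isHomogeneous_X k j).sub (hH.C_mul (v j / eval v H))
  rwa [one_mul] at h

theorem eval_restrictAlong (H : MvPolynomial σ k) (v w : σ → k) (p : MvPolynomial σ k) :
    eval w (restrictAlong H v p) = eval (fun j => w j - v j / eval v H * eval w H) p := by
  induction p using MvPolynomial.induction_on with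
  | C c => simp [restrictAlong]
  | add p q hp hq => simp only [map_add, hp, hq]
  | mul_X p j hp => simp only [map_mul, hp]; simp [restrictAlong]

theorem dvd_of_linear_of_forall_eval_eq_zero (hL : L.IsHomogeneous 1) (hM : M.IsHomogeneous 1)
    (h : ∀ v, eval v L = 0 → eval v M = 0) : L ∣ M := by
  rcases eq_or_ne L 0 with rfl | hL0
  · by_contra hM0
    obtain ⟨v, hv⟩ := exists_eval_ne_zero_of_linear hM fun hM0' => hM0 (zero_dvd_iff.2 hM0')
    exact hv (h v (map_zero _))
  obtain ⟨v, hv⟩ := exists_eval_ne_zero_of_linear hL hL0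
  rw [← restrictAlong_eq_zero_iff hL hv]
  by_contra hM0
  obtain ⟨w, hw⟩ := exists_eval_ne_zero_of_linear (isHomogeneous_restrictAlong hL v hM) hM0
  rw [eval_restrictAlong] at hw
  refine hw (h _ ?_)
  rw [← eval_restrictAlong, restrictAlong_self hL hv, map_zero]

/-- The trace `ker H ∩ ker L` of the hyperplane `ker L` on `ker H`. -/
def hyperplaneTrace (H L : MvPolynomial σ k) : Set (σ → k) :=
  {v | eval v H = 0 ∧ eval v L = 0}

theorem associated_restrictAlong_iff {v : σ → k} (hH : H.IsHomogeneous 1) (hv : eval v H ≠ 0)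
    (hL : L.IsHomogeneous 1) (hM : M.IsHomogeneous 1) :
    Associated (restrictAlong H v L) (restrictAlong H v M) ↔
      hyperplaneTrace H L = hyperplaneTrace H M := by
  have dvd_of_subset {P N : MvPolynomial σ k} (hP : P.IsHomogeneous 1) (hN : N.IsHomogeneous 1)
      (h : hyperplaneTrace H P ⊆ hyperplaneTrace H N) :
      restrictAlong H v P ∣ restrictAlong H v N := by
    refine dvd_of_linear_of_forall_eval_eq_zero (isHomogeneous_restrictAlong hH v hP)
      (isHomogeneous_restrictAlong hH v hN) fun w hw => ?_
    rw [eval_restrictAlong] at hw ⊢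
    refine (h ⟨?_, hw⟩).2
    rw [← eval_restrictAlong, restrictAlong_self hH hv, map_zero]
  have subset_of_dvd {P N : MvPolynomial σ k} (hP : P.IsHomogeneous 1) (hN : N.IsHomogeneous 1)
      (h : restrictAlong H v P ∣ restrictAlong H v N) :
      hyperplaneTrace H P ⊆ hyperplaneTrace H N := by
    rintro w ⟨hwH, hwP⟩
    have hw := map_dvd (eval w) h
    rw [restrictAlong_of_linear v hP, restrictAlong_of_linear v hN] at hw
    exact ⟨hwH, by simpa [hwH, hwP] using hw⟩
  exact ⟨fun h => (subset_of_dvd hL hM h.dvd).antisymm (subset_of_dvd hM hL h.symm.dvd), fun h =>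
    associated_of_dvd_dvd (dvd_of_subset hL hM h.subset) (dvd_of_subset hM hL h.symm.subset)⟩

end LinearForms

section Derivations

variable {ι σ R S : Type*} [CommRing R] [CommRing S] [Algebra R S]

theorem dvd_derivation_of_dvd_derivation_prod [DecompositionMonoid S] (D : Derivation R S S)
    {s : Finset ι} {f : ι → S} (hf : (s : Set ι).Pairwise fun i j => IsRelPrime (f i) (f j)) {i : ι}
    (hi : i ∈ s) (h : f i ∣ D (∏ j ∈ s, f j)) : f i ∣ D (f i) := by
  rw [← Finset.mul_prod_erase s f hi, Derivation.leibniz, smul_eq_mul, smul_eq_mul,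
    dvd_add_right (dvd_mul_right _ _)] at h
  refine IsRelPrime.dvd_of_dvd_mul_left (IsRelPrime.prod_right fun j hj => ?_) h
  exact hf hi (Finset.mem_of_mem_erase hj) (Finset.ne_of_mem_erase hj).symm

theorem derivation_prod_eq_sum_mul_prod (D : Derivation R S S) (s : Finset ι) {f p : ι → S}
    (h : ∀ i ∈ s, D (f i) = f i * p i) : D (∏ i ∈ s, f i) = (∑ i ∈ s, p i) * ∏ i ∈ s, f i := by
  induction s using Finset.induction_on with
  | empty => simp
  | insert a s ha ih =>
    rw [Finset.prod_insert ha, Finset.sum_insert ha, Derivation.leibniz,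
      ih fun i hi => h i (Finset.mem_insert_of_mem hi), h a (Finset.mem_insert_self a s),
      smul_eq_mul, smul_eq_mul]
    ring

variable (D : Derivation R (MvPolynomial σ R) (MvPolynomial σ R))

theorem derivation_eq_sum_mul_pderiv [Fintype σ] (p : MvPolynomial σ R) :
    D p = ∑ i, D (X i) * pderiv i p := by
  induction p using MvPolynomial.induction_on with
  | C c => simp [← algebraMap_eq]
  | add p q hp hq => simp only [map_add, hp, hq, mul_add, Finset.sum_add_distrib]
  | mul_X p j hp =>
    simp [hp, pderiv_X, Pi.single_apply, mul_add, Finset.sum_add_distrib, Finset.mul_sum,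
      mul_left_comm, mul_comm]

/-- A derivation of polynomial degree `r`: it maps linear forms to forms of degree `r`. -/
def IsHomogeneousDerivation (r : ℕ) : Prop :=
  ∀ j, (D (X j)).IsHomogeneous r

variable {D} in
theorem IsHomogeneousDerivation.apply [Finite σ] {r n : ℕ} (hD : IsHomogeneousDerivation D r)
    {p : MvPolynomial σ R} (hp : p.IsHomogeneous n) : (D p).IsHomogeneous (r + (n - 1)) := by
  cases nonempty_fintype σ
  rw [derivation_eq_sum_mul_pderiv]
  exact IsHomogeneous.sum _ _ _ fun j _ => (hD j).mul hp.pderiv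

variable (σ R) in
/-- The Euler derivation `∑ xᵢ ∂ᵢ`. -/
noncomputable def eulerDerivation : Derivation R (MvPolynomial σ R) (MvPolynomial σ R) :=
  mkDerivation R X

theorem eulerDerivation_of_isHomogeneous [Finite σ] {p : MvPolynomial σ R} {n : ℕ}
    (hp : p.IsHomogeneous n) : eulerDerivation σ R p = n • p := by
  cases nonempty_fintype σ
  rw [derivation_eq_sum_mul_pderiv, ← hp.sum_X_mul_pderiv]
  simp [eulerDerivation]

/-- A derivation that is logarithmic along every hyperplane `ker α`, `α ∈ A`. -/
def IsLogarithmic (A : Finset (MvPolynomial σ R))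
    (D : Derivation R (MvPolynomial σ R) (MvPolynomial σ R)) : Prop :=
  ∀ α ∈ A, α ∣ D α

end Derivations

theorem sum_card_fiber_sub_one {α β : Type*} [DecidableEq β] (s : Finset α) (f : α → β) :
    ∑ b ∈ s.image f, ((s.filter fun a => f a = b).card - 1) = s.card - (s.image f).card := by
  rw [Finset.sum_tsub_distrib, ← Finset.card_eq_sum_card_image, ← Finset.card_eq_sum_ones]
  intro b hb
  obtain ⟨a, ha, hab⟩ := Finset.mem_image.1 hb
  exact Finset.card_pos.2 ⟨a, Finset.mem_filter.2 ⟨ha, hab⟩⟩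

section RestrictionOfDerivations

variable {σ k : Type*} [Field k] {H M : MvPolynomial σ k} {v : σ → k}
  {A : Finset (MvPolynomial σ k)} {D : Derivation k (MvPolynomial σ k) (MvPolynomial σ k)}

/- `M` and `L` have proportional restrictions to `ker H`, so `M = c * L + g * H` with constants `c`
and `g`; the alternating expression `M * D H - H * D M` is then `c` times the one for `L`. -/
theorem dvd_mul_derivation_sub_of_associated {L : MvPolynomial σ k} (hL : L.IsHomogeneous 1)
    (hM : M.IsHomogeneous 1) (hLM : Associated (restrictAlong H v L) (restrictAlong H v M))
    (hLD : L ∣ D L) : L ∣ M * D H - H * D M := by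
  have hdet {N : MvPolynomial σ k} (hN : N.IsHomogeneous 1) :
      N * D H - H * D N = restrictAlong H v N * D H - H * D (restrictAlong H v N) := by
    rw [restrictAlong_of_linear v hN, map_sub, Derivation.leibniz, derivation_C]
    simp only [smul_eq_mul]
    ring
  obtain ⟨c, hc⟩ := exists_eq_C_mul_of_associated hLM
  have hscale : M * D H - H * D M = C c * (L * D H - H * D L) := by
    rw [hdet hM, hdet hL, hc, Derivation.leibniz, derivation_C]
    simp only [smul_eq_mul]
    ring
  rw [hscale]
  exact (dvd_sub (dvd_mul_right _ _) (hLD.mul_left _)).mul_left _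

theorem restrictAlong_pow_dvd_restrictAlong_derivation (hH : H.IsHomogeneous 1)
    (hv : eval v H ≠ 0) (hA : ∀ L ∈ A, L.IsHomogeneous 1)
    (hrel : (A : Set (MvPolynomial σ k)).Pairwise IsRelPrime) (hD : IsLogarithmic A D)
    (hM : M.IsHomogeneous 1) (hM0 : ¬H ∣ M)
    (hAM : ∀ L ∈ A, Associated (restrictAlong H v L) (restrictAlong H v M)) :
    restrictAlong H v M ^ (A.card - 1) ∣ restrictAlong H v (D H) := by
  have hprod : ∏ L ∈ A, L ∣ M * D H - H * D M := Finset.prod_dvd_of_isRelPrime hrel fun L hL =>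
    dvd_mul_derivation_sub_of_associated (hA L hL) hM (hAM L hL) (hD L hL)
  have hpow : restrictAlong H v M ^ A.card ∣ restrictAlong H v M * restrictAlong H v (D H) :=
    calc restrictAlong H v M ^ A.card = ∏ _L ∈ A, restrictAlong H v M := by rw [Finset.prod_const]
      _ ∣ ∏ L ∈ A, restrictAlong H v L :=
        Finset.prod_dvd_prod_of_dvd _ _ fun L hL => (hAM L hL).symm.dvd
      _ = restrictAlong H v (∏ L ∈ A, L) := (map_prod _ _ _).symm
      _ ∣ restrictAlong H v (M * D H - H * D M) := map_dvd _ hprod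
      _ = restrictAlong H v M * restrictAlong H v (D H) := by
        rw [map_sub, map_mul, map_mul, restrictAlong_self hH hv, zero_mul, sub_zero]
  rw [← restrictAlong_eq_zero_iff hH hv] at hM0
  rcases hm : A.card with - | m
  · simp
  · rwa [hm, pow_succ', mul_dvd_mul_iff_left hM0] at hpow

/- `B` is a version of Terao's polynomial: the restrictions of all forms of `A`, with one factor
left out for each hyperplane of the restricted arrangement. -/
theorem exists_isHomogeneous_dvd_restrictAlong_derivation (hH : H.IsHomogeneous 1)
    (hv : eval v H ≠ 0) (hA : ∀ L ∈ A, L.IsHomogeneous 1)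
    (hrel : (A : Set (MvPolynomial σ k)).Pairwise IsRelPrime) (hHA : ∀ L ∈ A, ¬H ∣ L)
    (hD : IsLogarithmic A D) :
    ∃ B : MvPolynomial σ k, B.IsHomogeneous (A.card - (A.image (hyperplaneTrace H)).card) ∧
      B ∣ restrictAlong H v (D H) := by
  choose! M hMA hMtrace using fun t (ht : t ∈ A.image (hyperplaneTrace H)) => Finset.mem_image.1 ht
  have hφM {t} (ht : t ∈ A.image (hyperplaneTrace H)) :
      (restrictAlong H v (M t)).IsHomogeneous 1 ∧ restrictAlong H v (M t) ≠ 0 :=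
    ⟨isHomogeneous_restrictAlong hH v (hA _ (hMA t ht)),
      (restrictAlong_eq_zero_iff hH hv).not.2 (hHA _ (hMA t ht))⟩
  let fiber t := A.filter fun L => hyperplaneTrace H L = t
  refine ⟨∏ t ∈ A.image (hyperplaneTrace H), restrictAlong H v (M t) ^ ((fiber t).card - 1),
    ?_, Finset.prod_dvd_of_isRelPrime ?_ ?_⟩
  · rw [← sum_card_fiber_sub_one]
    exact IsHomogeneous.prod _ _ _ fun t ht => by simpa using (hφM ht).1.pow _
  · intro t ht t' ht' hne
    refine IsRelPrime.pow (isRelPrime_of_not_associated_of_linear (hφM ht).1 (hφM ht).2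
      (hφM ht').1 (hφM ht').2 fun hass => hne ?_)
    rwa [associated_restrictAlong_iff hH hv (hA _ (hMA t ht)) (hA _ (hMA t' ht')),
      hMtrace t ht, hMtrace t' ht'] at hass
  · intro t ht
    have hfiber : fiber t ⊆ A := Finset.filter_subset _ A
    refine restrictAlong_pow_dvd_restrictAlong_derivation hH hv (fun L hL => hA L (hfiber hL))
      (hrel.mono (Finset.coe_subset.2 hfiber)) (fun L hL => hD L (hfiber hL)) (hA _ (hMA t ht))
      (hHA _ (hMA t ht)) fun L hL => ?_
    rw [associated_restrictAlong_iff hH hv (hA L (hfiber hL)) (hA _ (hMA t ht)), hMtrace t ht]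
    exact (Finset.mem_filter.1 hL).2

theorem IsLogarithmic.dvd_apply_of_degree_lt (hD : IsLogarithmic A D) (hH : H.IsHomogeneous 1)
    (hA : ∀ L ∈ A, L.IsHomogeneous 1) (hrel : (A : Set (MvPolynomial σ k)).Pairwise IsRelPrime)
    (hHA : ∀ L ∈ A, ¬H ∣ L) {r : ℕ} (hDH : (D H).IsHomogeneous r)
    (hr : r < A.card - (A.image (hyperplaneTrace H)).card) : H ∣ D H := by
  rcases eq_or_ne H 0 with rfl | hH0
  · rw [map_zero]
  obtain ⟨v, hv⟩ := exists_eval_ne_zero_of_linear hH hH0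
  obtain ⟨B, hB, hBdvd⟩ := exists_isHomogeneous_dvd_restrictAlong_derivation hH hv hA hrel hHA hD
  rw [← restrictAlong_eq_zero_iff hH hv]
  exact eq_zero_of_dvd_of_degree_lt hB (isHomogeneous_restrictAlong hH v hDH) hBdvd hr

end RestrictionOfDerivations

section JacobianRelations

omit [CharZero K]

variable {A : Finset (MvPolynomial (Fin ℓ) K)} {H : MvPolynomial (Fin ℓ) K} {r : ℕ}
  {D : Derivation K (MvPolynomial (Fin ℓ) K) (MvPolynomial (Fin ℓ) K)}

/-- The degrees of the nonzero homogeneous elements of `D_0(A)`, the module of derivations killing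
`Q(A)`; its least element is `r(A)`. -/
def jacobianRelationDegrees (A : Finset (MvPolynomial (Fin ℓ) K)) : Set ℕ :=
  {r | ∃ D : Derivation K (MvPolynomial (Fin ℓ) K) (MvPolynomial (Fin ℓ) K),
    D ≠ 0 ∧ IsHomogeneousDerivation D r ∧ D (Qpoly A) = 0}

theorem mdr_eq_sInf_jacobianRelationDegrees (A : Finset (MvPolynomial (Fin ℓ) K)) :
    mdr A = sInf (jacobianRelationDegrees A) := by
  refine congrArg sInf (Set.ext fun r => ?_)
  refine (mkDerivationEquiv K).toEquiv.exists_congr fun θ => ?_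
  have happly : applyDer θ (Qpoly A) = mkDerivation K θ (Qpoly A) := by
    rw [derivation_eq_sum_mul_pderiv]
    simp only [mkDerivation_X, applyDer]
  rw [happly, ← (mkDerivationEquiv K).map_ne_zero_iff]
  simp [IsHomogeneousDerivation, mkDerivationEquiv]

namespace IsArrangement

theorem isRelPrime (hA : IsArrangement A) :
    (A : Set (MvPolynomial (Fin ℓ) K)).Pairwise IsRelPrime := by
  intro α hα β hβ hne
  refine isRelPrime_of_not_associated_of_linear (hA.1 α hα).2 (hA.1 α hα).1 (hA.1 β hβ).2
    (hA.1 β hβ).1 fun hass => ?_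
  obtain ⟨c, hc⟩ := exists_eq_C_mul_of_associated hass.symm
  exact hA.2 α hα β hβ hne c (by rw [hc, smul_eq_C_mul])

theorem subset {B : Finset (MvPolynomial (Fin ℓ) K)} (hA : IsArrangement A) (hBA : B ⊆ A) :
    IsArrangement B :=
  ⟨fun α hα => hA.1 α (hBA hα), fun α hα β hβ => hA.2 α (hBA hα) β (hBA hβ)⟩

theorem Qpoly_ne_zero (hA : IsArrangement A) : Qpoly A ≠ 0 :=
  Finset.prod_ne_zero_iff.2 fun α hα => (hA.1 α hα).1

theorem isHomogeneous_Qpoly (hA : IsArrangement A) : (Qpoly A).IsHomogeneous A.card := by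
  rw [Finset.card_eq_sum_ones]
  exact IsHomogeneous.prod A _ _ fun α hα => (hA.1 α hα).2

theorem eulerDerivation_Qpoly (hA : IsArrangement A) :
    eulerDerivation (Fin ℓ) K (Qpoly A) = C (A.card : K) * Qpoly A := by
  rw [eulerDerivation_of_isHomogeneous hA.isHomogeneous_Qpoly, nsmul_eq_mul, map_natCast]

theorem isLogarithmic_of_Qpoly_eq_zero (hA : IsArrangement A) (hD : D (Qpoly A) = 0) :
    IsLogarithmic A D := fun α hα =>
  dvd_derivation_of_dvd_derivation_prod (f := id) D hA.isRelPrime hα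
    (by simpa [Qpoly] using hD ▸ dvd_zero α)

theorem ne_smul_eulerDerivation (hA : IsArrangement A) (hcard : (A.card : K) ≠ 0) (hD0 : D ≠ 0)
    (hD : D (Qpoly A) = 0) (p : MvPolynomial (Fin ℓ) K) : D ≠ p • eulerDerivation (Fin ℓ) K := by
  rintro rfl
  rw [Derivation.smul_apply, hA.eulerDerivation_Qpoly, smul_eq_mul] at hD
  have hp : p = 0 := (mul_eq_zero.1 hD).resolve_right
    (mul_ne_zero (C_ne_zero.2 hcard) hA.Qpoly_ne_zero)
  exact hD0 (by rw [hp, zero_smul])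

theorem mem_jacobianRelationDegrees_of_isLogarithmic (hA : IsArrangement A)
    (hcard : (A.card : K) ≠ 0) (hr : IsHomogeneousDerivation D r) (hD : IsLogarithmic A D)
    (hDE : ∀ p : MvPolynomial (Fin ℓ) K, D ≠ p • eulerDerivation (Fin ℓ) K) :
    r ∈ jacobianRelationDegrees A := by
  choose! p hp using hD
  refine ⟨D - (C (A.card : K)⁻¹ * ∑ α ∈ A, p α) • eulerDerivation (Fin ℓ) K,
    sub_ne_zero.2 (hDE _), fun j => ?_, ?_⟩
  · rw [Derivation.sub_apply, Derivation.smul_apply, eulerDerivation, mkDerivation_X, smul_eq_mul,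
      mul_assoc, Finset.sum_mul]
    refine (hr j).sub (IsHomogeneous.C_mul (IsHomogeneous.sum _ _ _ fun α hα => ?_) _)
    refine isHomogeneous_mul_of_isHomogeneous_mul (hA.1 α hα).2 (hA.1 α hα).1
      (isHomogeneous_X K j) ?_
    rw [← hp α hα]
    exact hr.apply (hA.1 α hα).2
  · have hcancel : C (A.card : K)⁻¹ * C (A.card : K) = (1 : MvPolynomial (Fin ℓ) K) := by
      rw [← C_mul, inv_mul_cancel₀ hcard, C_1]
    have hDQ : D (Qpoly A) = (∑ α ∈ A, p α) * Qpoly A := derivation_prod_eq_sum_mul_prod D A hp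
    rw [Derivation.sub_apply, Derivation.smul_apply, hDQ, hA.eulerDerivation_Qpoly, smul_eq_mul]
    linear_combination -(∑ α ∈ A, p α) * Qpoly A * hcancel

theorem mem_jacobianRelationDegrees_iff (hA : IsArrangement A) (hcard : (A.card : K) ≠ 0) :
    r ∈ jacobianRelationDegrees A ↔
      ∃ D : Derivation K (MvPolynomial (Fin ℓ) K) (MvPolynomial (Fin ℓ) K),
        IsHomogeneousDerivation D r ∧ IsLogarithmic A D ∧
          ∀ p : MvPolynomial (Fin ℓ) K, D ≠ p • eulerDerivation (Fin ℓ) K :=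
  ⟨fun ⟨D, hD0, hr, hD⟩ =>
    ⟨D, hr, hA.isLogarithmic_of_Qpoly_eq_zero hD, hA.ne_smul_eulerDerivation hcard hD0 hD⟩,
    fun ⟨_, hr, hD, hDE⟩ => hA.mem_jacobianRelationDegrees_of_isLogarithmic hcard hr hD hDE⟩

theorem jacobianRelationDegrees_nonempty (hl : 2 ≤ ℓ) (hA : IsArrangement A)
    (hcard : (A.card : K) ≠ 0) : (jacobianRelationDegrees A).Nonempty := by
  have : Nontrivial (Fin ℓ) := Fin.nontrivial_iff_two_le.2 hl
  obtain ⟨i, j, hij⟩ := exists_pair_ne (Fin ℓ)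
  refine ⟨A.card, (hA.mem_jacobianRelationDegrees_iff hcard).2
    ⟨Qpoly A • pderiv i, fun m => ?_, fun α hα => ?_, fun p hp => hA.Qpoly_ne_zero ?_⟩⟩
  · exact hA.isHomogeneous_Qpoly.mul (isHomogeneous_X K m).pderiv
  · exact (Finset.dvd_prod_of_mem id hα).mul_right _
  · have hp0 : p = 0 := by
      simpa [eulerDerivation, pderiv_X_of_ne hij.symm] using (DFunLike.congr_fun hp (X j)).symm
    simpa [hp0] using DFunLike.congr_fun hp (X i)

theorem jacobianRelationDegrees_erase_subset (hA : IsArrangement A) (hcard : (A.card : K) ≠ 0)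
    (hcard' : ((A.erase H).card : K) ≠ 0) :
    jacobianRelationDegrees A ⊆ jacobianRelationDegrees (A.erase H) := by
  intro r hr
  obtain ⟨D, hDr, hD, hDE⟩ := (hA.mem_jacobianRelationDegrees_iff hcard).1 hr
  exact ((hA.subset (A.erase_subset H)).mem_jacobianRelationDegrees_iff hcard').2
    ⟨D, hDr, fun α hα => hD α (Finset.mem_of_mem_erase hα), hDE⟩

theorem isLogarithmic_of_isLogarithmic_erase (hA : IsArrangement A) (hH : H ∈ A)
    (hDr : IsHomogeneousDerivation D r) (hD : IsLogarithmic (A.erase H) D)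
    (hr : r < (A.erase H).card - restCard A H) : IsLogarithmic A D := by
  have hA' := hA.subset (A.erase_subset H)
  have hH1 := (hA.1 H hH).2
  have hHA' {L} (hL : L ∈ A.erase H) : ¬H ∣ L := fun hdvd =>
    (irreducible_of_linear hH1 (hA.1 H hH).1).not_isUnit <|
      (hA.isRelPrime hH (Finset.mem_of_mem_erase hL) (Finset.ne_of_mem_erase hL).symm)
        dvd_rfl hdvd
  intro α hα
  rcases eq_or_ne α H with rfl | hne
  · exact hD.dvd_apply_of_degree_lt hH1 (fun L hL => (hA'.1 L hL).2) hA'.isRelPrime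
      (fun _ => hHA') (hDr.apply hH1) hr
  · exact hD α (Finset.mem_erase.2 ⟨hne, hα⟩)

end IsArrangement

theorem IsEssential.nonempty (hl : ℓ ≠ 0) (hA : IsEssential A) : A.Nonempty := by
  have : NeZero ℓ := ⟨hl⟩
  by_contra hempty
  rw [Finset.not_nonempty_iff_eq_empty] at hempty
  exact one_ne_zero (congrFun (hA 1 (by simp [hempty])) 0)

theorem mdr_deletion_criterion_general (hl : 2 ≤ ℓ) (hA : IsArrangement A) (hH : H ∈ A)
    (hcard : (A.card : K) ≠ 0) (hcard' : ((A.erase H).card : K) ≠ 0) :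
    (mdr A < A.card - restCard A H → mdr A = mdr (A.erase H)) ∧
    (mdr (A.erase H) < (A.erase H).card - restCard A H → mdr A = mdr (A.erase H)) := by
  have hA' := hA.subset (A.erase_subset H)
  have hsub := hA.jacobianRelationDegrees_erase_subset hcard hcard'
  have hne := hA.jacobianRelationDegrees_nonempty hl hcard
  simp only [mdr_eq_sInf_jacobianRelationDegrees]
  have hle := Nat.sInf_le (hsub (Nat.sInf_mem hne))
  have hge (hlt : sInf (jacobianRelationDegrees (A.erase H)) <
      (A.erase H).card - restCard A H) :
      sInf (jacobianRelationDegrees A) ≤ sInf (jacobianRelationDegrees (A.erase H)) := by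
    obtain ⟨D, hDr, hD, hDE⟩ :=
      (hA'.mem_jacobianRelationDegrees_iff hcard').1 (Nat.sInf_mem (hne.mono hsub))
    exact Nat.sInf_le ((hA.mem_jacobianRelationDegrees_iff hcard).2
      ⟨D, hDr, hA.isLogarithmic_of_isLogarithmic_erase hH hDr hD hlt, hDE⟩)
  have hcard_erase := Finset.card_erase_of_mem hH
  exact ⟨fun hlt => by omega, fun hlt => (hge hlt).antisymm hle⟩

end JacobianRelations

/-- Let `ℓ ≥ 2`, let `A` be an essential hyperplane arrangement in `K^ℓ`,
let `H ∈ A`, and suppose `A' = A \ {H}` is also essential.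
If `|A| − |A^H| > r(A)`, then `r(A) = r(A')`; likewise,
if `|A'| − |A^H| > r(A')`, then `r(A) = r(A')`. -/
theorem mdr_deletion_criterion (hl : 2 ≤ ℓ) (A : Finset (MvPolynomial (Fin ℓ) K))
    (hA : IsArrangement A) (hAess : IsEssential A)
    (H : MvPolynomial (Fin ℓ) K) (hH : H ∈ A)
    (hA'ess : IsEssential (A.erase H)) :
    (mdr A < A.card - restCard A H → mdr A = mdr (A.erase H)) ∧
    (mdr (A.erase H) < (A.erase H).card - restCard A H →
      mdr A = mdr (A.erase H)) :=
  mdr_deletion_criterion_general hl hA hH (Nat.cast_ne_zero.2 (Finset.card_ne_zero_of_mem hH))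
    (Nat.cast_ne_zero.2 (hA'ess.nonempty (by omega)).card_ne_zero)
end

section
/- (Deletion theorem for r(A) for line arrangements.) Let A' be a line arrangement in P^2 and let H be a line not in A', with A = A' ∪ {H}, where both A and A' are essential. Set r = r(A). If the number of intersection points of A lying on H is at least r + 2, then r(A') = r − 1. -/
open Classical MvPolynomial

variable {K : Type*} [Field K] [CharZero K] {ℓ : ℕ}

/-!
If `|A|` is invertible, `r(A)` is the least degree of a homogeneous logarithmic derivation of `A`
that is not a multiple of the Euler derivation `E`. Multiplying by the form `H` of the new line
gives `r(A) ≤ r(A') + 1`. Conversely, let `θ` attain `r = r(A)`. Where `H` meets a second line of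
`A`, `θ` is tangent to both lines, hence parallel to `E`, so the minors `X i * θ j - X j * θ i`
vanish at all the intersection points on `H`. These minors have degree `r + 1` and the points number
at least `r + 2`, so `H` divides the minors. Hence `θ = q E + H φ`, where `φ` is a logarithmic
derivation of `A'` of degree `r - 1` that is not a multiple of `E`.
-/

section LinearForms

variable {R σ : Type*}

lemma homogeneousComponent_mul_of_left [CommSemiring R] {m : ℕ} {p : MvPolynomial σ R}
    (hp : p.IsHomogeneous m) (q : MvPolynomial σ R) (k : ℕ) :
    homogeneousComponent k (p * q) =
      if m ≤ k then p * homogeneousComponent (k - m) q else 0 := by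
  let := gradedAlgebra (σ := σ) (R := R)
  simp only [← decomposition.decompose'_apply]
  exact DirectSum.coe_decompose_mul_of_left_mem (homogeneousSubmodule σ R) k hp

lemma isHomogeneous_of_isHomogeneous_mul [CommRing R] [IsDomain R] {m k : ℕ}
    {p q : MvPolynomial σ R} (hp : p.IsHomogeneous m) (hp0 : p ≠ 0)
    (hpq : (p * q).IsHomogeneous k) : q.IsHomogeneous (k - m) := by
  have hq (i : ℕ) (hi : i ≠ k - m) : homogeneousComponent i q = 0 := by
    have hmul := homogeneousComponent_mul_of_left hp q (m + i)
    rw [homogeneousComponent_of_mem hpq, if_neg (by omega), if_pos (by omega),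
      Nat.add_sub_cancel_left] at hmul
    exact (mul_eq_zero.mp hmul.symm).resolve_left hp0
  rw [← sum_homogeneousComponent q]
  refine IsHomogeneous.sum _ _ _ fun i _ => ?_
  obtain rfl | hi := eq_or_ne i (k - m)
  · exact homogeneousComponent_isHomogeneous _ q
  · rw [hq i hi]
    exact isHomogeneous_zero σ R _

lemma degree_le_of_isHomogeneous_mul [CommSemiring R] {m k : ℕ} {p q : MvPolynomial σ R}
    (hp : p.IsHomogeneous m) (hpq : (p * q).IsHomogeneous k) (hpq0 : p * q ≠ 0) : m ≤ k := by
  by_contra hmk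
  rw [← homogeneousComponent_eq_self hpq, homogeneousComponent_mul_of_left hp, if_neg hmk] at hpq0
  exact hpq0 rfl

lemma dvd_of_mem_span_pair_of_degree_lt [CommSemiring R] {m n k : ℕ} {p q f : MvPolynomial σ R}
    (hp : p.IsHomogeneous m) (hq : q.IsHomogeneous n) (hf : f.IsHomogeneous k) (hkn : k < n)
    (hmem : f ∈ Ideal.span {p, q}) : p ∣ f := by
  obtain ⟨a, b, hab⟩ := Ideal.mem_span_pair.mp hmem
  rw [← homogeneousComponent_eq_self hf, ← hab, map_add, mul_comm a, mul_comm b,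
    homogeneousComponent_mul_of_left hp, homogeneousComponent_mul_of_left hq, if_neg hkn.not_ge,
    add_zero]
  split_ifs
  · exact dvd_mul_right _ _
  · exact dvd_zero _

lemma mem_idealSpan_iff_mem_span [CommSemiring R] {s : Set (MvPolynomial σ R)}
    (hs : ∀ β ∈ s, β.IsHomogeneous 1) {α : MvPolynomial σ R} (hα : α.IsHomogeneous 1) :
    α ∈ Ideal.span s ↔ α ∈ Submodule.span R s := by
  refine ⟨fun hmem => ?_, fun hmem => Submodule.span_le_restrictScalars R _ s hmem⟩
  suffices ∀ f ∈ Ideal.span s, homogeneousComponent 1 f ∈ Submodule.span R s by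
    simpa only [homogeneousComponent_eq_self hα] using this α hmem
  intro f hf
  induction hf using Submodule.closure_induction with
  | zero => simp only [map_zero, zero_mem]
  | add f g _ _ hf hg => simpa only [map_add] using add_mem hf hg
  | smul_mem g β hβ =>
    rw [smul_eq_mul, mul_comm, homogeneousComponent_mul_of_left (hs β hβ), if_pos le_rfl,
      Nat.sub_self, homogeneousComponent_zero, mul_comm, ← smul_eq_C_mul]
    exact Submodule.smul_mem _ _ (Submodule.subset_span hβ)

-- For a linear projection `π` onto the span of `s`, the ideal is the kernel of the algebra
-- endomorphism that acts on linear forms as `α ↦ α - π α`.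
lemma isPrime_span_of_isHomogeneous_one [Field R] {s : Set (MvPolynomial σ R)}
    (hs : ∀ β ∈ s, β.IsHomogeneous 1) : (Ideal.span s).IsPrime := by
  obtain ⟨π, hπ⟩ := (Submodule.span R s).subtype.exists_leftInverse_of_injective
    (Submodule.ker_subtype _)
  let φ : MvPolynomial σ R →ₐ[R] MvPolynomial σ R := aeval fun i => X i - (π (X i)).1
  have hφ (α : MvPolynomial σ R) (hα : α.IsHomogeneous 1) : φ α = α - π α := by
    rw [← mem_homogeneousSubmodule, homogeneousSubmodule_one_eq_span_X] at hα
    refine LinearMap.eqOn_span (f := φ.toLinearMap)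
      (g := LinearMap.id - (Submodule.span R s).subtype ∘ₗ π) ?_ hα
    rintro _ ⟨i, rfl⟩
    simp [φ]
  have hφ_mk : (Ideal.Quotient.mkₐ R (Ideal.span s)).comp φ = Ideal.Quotient.mkₐ R _ := by
    ext i
    simp only [φ, AlgHom.comp_apply, aeval_X, Ideal.Quotient.mkₐ_eq_mk]
    rw [Ideal.Quotient.eq, sub_sub_cancel_left, neg_mem_iff]
    exact Submodule.span_le_restrictScalars R _ s (π (X i)).2
  have hker : Ideal.span s = RingHom.ker φ := by
    refine le_antisymm (Ideal.span_le.mpr fun β hβ => ?_) fun f hf => ?_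
    · have hπβ : π β = ⟨β, Submodule.subset_span hβ⟩ :=
        LinearMap.congr_fun hπ ⟨β, Submodule.subset_span hβ⟩
      rw [SetLike.mem_coe, RingHom.mem_ker, hφ β (hs β hβ), hπβ, sub_self]
    · rw [← Ideal.Quotient.eq_zero_iff_mem, ← Ideal.Quotient.mkₐ_eq_mk R, ← hφ_mk,
        AlgHom.comp_apply, RingHom.mem_ker.mp hf, map_zero]
  exact hker ▸ RingHom.ker_isPrime φ

lemma prime_of_isHomogeneous_one [Field R] {α : MvPolynomial σ R} (hα : α.IsHomogeneous 1)
    (hα0 : α ≠ 0) : Prime α :=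
  (Ideal.span_singleton_prime hα0).mp <| isPrime_span_of_isHomogeneous_one <| by simpa using hα

lemma X_mem_span_of_linearIndependent [Field R] [Finite σ] {α : σ → MvPolynomial σ R}
    (hα : ∀ i, (α i).IsHomogeneous 1) (hli : LinearIndependent R α) (i : σ) :
    X i ∈ Submodule.span R (Set.range α) := by
  have := Fintype.ofFinite σ
  have hle : Submodule.span R (Set.range α) ≤ Submodule.span R (Set.range X) := by
    rw [← homogeneousSubmodule_one_eq_span_X, Submodule.span_le]
    exact Set.range_subset_iff.mpr hα
  have := FiniteDimensional.span_of_finite R (Set.finite_range (X : σ → MvPolynomial σ R))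
  rw [Submodule.eq_of_le_of_finrank_eq hle
    ((finrank_span_eq_card hli).trans (finrank_span_eq_card (linearIndependent_X σ R)).symm)]
  exact Submodule.subset_span ⟨i, rfl⟩

end LinearForms

lemma mem_span_pair_prod {R : Type*} [CommRing R] {x y : R} {T : Finset R}
    (hprime : ∀ p ∈ T, (Ideal.span {x, p}).IsPrime)
    (hT : (T : Set R).Pairwise fun p q => q ∉ Ideal.span {x, p})
    (hy : ∀ p ∈ T, y ∈ Ideal.span {x, p}) : y ∈ Ideal.span {x, ∏ p ∈ T, p} := by
  induction T using Finset.induction_on with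
  | empty => exact Ideal.mem_span_pair.mpr ⟨0, y, by simp⟩
  | insert p T hp ih =>
    obtain ⟨a, b, rfl⟩ := Ideal.mem_span_pair.mp <| ih
      (fun q hq => hprime q (Finset.mem_insert_of_mem hq))
      (hT.mono (by simp)) (fun q hq => hy q (Finset.mem_insert_of_mem hq))
    have hp_prime := hprime p (Finset.mem_insert_self p T)
    have hx : x ∈ Ideal.span {x, p} := Ideal.subset_span (by simp)
    have hprod : ∏ q ∈ T, q ∉ Ideal.span {x, p} := fun hmem => by
      obtain ⟨q, hq, hqmem⟩ := Ideal.IsPrime.prod_mem_iff.mp hmem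
      exact hT (by simp) (by simp [hq]) (ne_of_mem_of_not_mem hq hp).symm hqmem
    have hb : b ∈ Ideal.span {x, p} :=
      (hp_prime.mem_or_mem <| (Ideal.add_mem_iff_right _ (Ideal.mul_mem_left _ a hx)).mp <|
        hy p (Finset.mem_insert_self p T)).resolve_right hprod
    obtain ⟨c, d, rfl⟩ := Ideal.mem_span_pair.mp hb
    rw [Finset.prod_insert hp]
    exact Ideal.mem_span_pair.mpr ⟨a + c * ∏ q ∈ T, q, d, by ring⟩

section LogarithmicDerivations

variable {F : Type*} [Field F] {n : ℕ} {A : Finset (MvPolynomial (Fin n) F)}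
  {H : MvPolynomial (Fin n) F} {θ : Fin n → MvPolynomial (Fin n) F}

lemma applyDer_eq_mkDerivation (θ : Fin n → MvPolynomial (Fin n) F)
    (f : MvPolynomial (Fin n) F) : applyDer θ f = mkDerivation F θ f := by
  have hsum (g : MvPolynomial (Fin n) F) : (∑ j, θ j • pderiv j) g = applyDer θ g := by
    rw [← Derivation.coeFnAddMonoidHom_apply, map_sum, Finset.sum_apply]
    rfl
  rw [← hsum]
  refine DFunLike.congr_fun (derivation_ext fun i => ?_) f
  rw [hsum, mkDerivation_X]
  simp [applyDer, pderiv_X, Pi.single_apply]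

lemma applyDer_mul (θ : Fin n → MvPolynomial (Fin n) F) (f g : MvPolynomial (Fin n) F) :
    applyDer θ (f * g) = f * applyDer θ g + g * applyDer θ f := by
  simp only [applyDer_eq_mkDerivation, Derivation.leibniz, smul_eq_mul]

lemma applyDer_add_left (θ φ : Fin n → MvPolynomial (Fin n) F) (f : MvPolynomial (Fin n) F) :
    applyDer (θ + φ) f = applyDer θ f + applyDer φ f := by
  simp only [applyDer, Pi.add_apply, add_mul, Finset.sum_add_distrib]

lemma applyDer_smul_left (p : MvPolynomial (Fin n) F) (θ : Fin n → MvPolynomial (Fin n) F)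
    (f : MvPolynomial (Fin n) F) : applyDer (p • θ) f = p * applyDer θ f := by
  simp only [applyDer, Pi.smul_apply, smul_eq_mul, mul_assoc, Finset.mul_sum]

lemma applyDer_X {k : ℕ} {f : MvPolynomial (Fin n) F} (hf : f.IsHomogeneous k) :
    applyDer X f = k • f :=
  hf.sum_X_mul_pderiv

lemma isHomogeneous_applyDer {k m : ℕ} {f : MvPolynomial (Fin n) F}
    (hθ : ∀ j, (θ j).IsHomogeneous k) (hf : f.IsHomogeneous m) :
    (applyDer θ f).IsHomogeneous (k + (m - 1)) :=
  IsHomogeneous.sum _ _ _ fun j _ => (hθ j).mul hf.pderiv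

lemma IsArrangement.mono {B : Finset (MvPolynomial (Fin n) F)} (hA : IsArrangement A)
    (hBA : B ⊆ A) : IsArrangement B :=
  ⟨fun α hα => hA.1 α (hBA hα), fun α hα β hβ => hA.2 α (hBA hα) β (hBA hβ)⟩

lemma isHomogeneous_Qpoly (hA : IsArrangement A) : (Qpoly A).IsHomogeneous A.card := by
  simpa [Qpoly] using IsHomogeneous.prod A id (fun _ => 1) fun α hα => (hA.1 α hα).2

lemma Qpoly_ne_zero (hA : IsArrangement A) : Qpoly A ≠ 0 :=
  Finset.prod_ne_zero_iff.mpr fun α hα => (hA.1 α hα).1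

lemma IsArrangement.prime (hA : IsArrangement A) {α : MvPolynomial (Fin n) F} (hα : α ∈ A) :
    Prime α :=
  prime_of_isHomogeneous_one (hA.1 α hα).2 (hA.1 α hα).1

lemma IsArrangement.notMem_span_singleton (hA : IsArrangement A) {α β : MvPolynomial (Fin n) F}
    (hα : α ∈ A) (hβ : β ∈ A) (hne : α ≠ β) : β ∉ Submodule.span F {α} := by
  rw [Submodule.mem_span_singleton]
  rintro ⟨c, hc⟩
  exact hA.2 β hβ α hα hne.symm c hc.symm

lemma IsArrangement.not_dvd (hA : IsArrangement A) {α β : MvPolynomial (Fin n) F} (hα : α ∈ A)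
    (hβ : β ∈ A) (hne : α ≠ β) : ¬ α ∣ β := by
  rw [← Ideal.mem_span_singleton,
    mem_idealSpan_iff_mem_span (by simpa using (hA.1 α hα).2) (hA.1 β hβ).2]
  exact hA.notMem_span_singleton hα hβ hne

/-- The module `D(A)` of logarithmic derivations: the derivations `θ = Σ θ_j ∂_j`, given by their
coefficient vectors, that satisfy `α ∣ θ(α)` for every form `α` of the arrangement. The Euler
derivation is the coefficient vector `X`. -/
def logDerivations (A : Finset (MvPolynomial (Fin n) F)) :
    Submodule (MvPolynomial (Fin n) F) (Fin n → MvPolynomial (Fin n) F) where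
  carrier := {θ | ∀ α ∈ A, α ∣ applyDer θ α}
  zero_mem' α _ := by simp [applyDer]
  add_mem' hθ hφ α hα := by
    rw [applyDer_add_left]
    exact dvd_add (hθ α hα) (hφ α hα)
  smul_mem' p θ hθ α hα := by
    rw [applyDer_smul_left]
    exact (hθ α hα).mul_left p

lemma X_mem_logDerivations (hA : IsArrangement A) : X ∈ logDerivations A := fun α hα => by
  rw [applyDer_X (hA.1 α hα).2, one_smul]

lemma Qpoly_dvd_applyDer_of_mem_logDerivations (hθ : θ ∈ logDerivations A) :
    Qpoly A ∣ applyDer θ (Qpoly A) := by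
  unfold Qpoly
  induction A using Finset.induction_on with
  | empty => simp
  | insert α A hα ih =>
    rw [Finset.prod_insert hα, applyDer_mul, mul_comm α]
    refine dvd_add ?_ (mul_dvd_mul_left _ (hθ α (Finset.mem_insert_self α A)))
    rw [mul_comm]
    exact mul_dvd_mul_left _ (ih fun β hβ => hθ β (Finset.mem_insert_of_mem hβ))

lemma mem_logDerivations_of_Qpoly_dvd_applyDer (hA : IsArrangement A)
    (hθ : Qpoly A ∣ applyDer θ (Qpoly A)) : θ ∈ logDerivations A := by
  intro α hα
  have hQ : Qpoly A = α * ∏ β ∈ A.erase α, β := (Finset.mul_prod_erase A id hα).symm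
  have hdvd : α ∣ (∏ β ∈ A.erase α, β) * applyDer θ α := by
    rw [← dvd_add_right (dvd_mul_right α (applyDer θ (∏ β ∈ A.erase α, β))), ← applyDer_mul, ← hQ]
    exact (hQ ▸ dvd_mul_right α _).trans hθ
  refine ((hA.prime hα).dvd_or_dvd hdvd).resolve_left fun hprod => ?_
  obtain ⟨β, hβ, hαβ⟩ := ((hA.prime hα).dvd_finsetProd_iff _).mp hprod
  exact hA.not_dvd hα (Finset.mem_of_mem_erase hβ) (Finset.ne_of_mem_erase hβ).symm hαβ

lemma smul_mem_logDerivations_insert (hθ : θ ∈ logDerivations A) :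
    H • θ ∈ logDerivations (insert H A) := by
  intro α hα
  rw [applyDer_smul_left]
  obtain rfl | hα := Finset.mem_insert.mp hα
  · exact dvd_mul_right _ _
  · exact (hθ α hα).mul_left H

lemma mem_logDerivations_of_smul_mem_insert (hA : IsArrangement (insert H A)) (hH : H ∉ A)
    (hθ : H • θ ∈ logDerivations (insert H A)) : θ ∈ logDerivations A := by
  intro α hα
  have hα' := Finset.mem_insert_of_mem (b := H) hα
  have hdvd := hθ α hα'
  rw [applyDer_smul_left] at hdvd
  exact ((hA.prime hα').dvd_or_dvd hdvd).resolve_left <|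
    hA.not_dvd hα' (Finset.mem_insert_self H A) (ne_of_mem_of_not_mem hα hH)

end LogarithmicDerivations

section MinimalDegree

variable {F : Type*} [Field F] {n : ℕ} {A : Finset (MvPolynomial (Fin n) F)}
  {H : MvPolynomial (Fin n) F}

-- `θ ↦ θ - (θ(Q) / (|A| Q)) E`, with `E` the Euler derivation, turns a logarithmic derivation into
-- a Jacobian relation of the same degree.
lemma exists_jacobianRelation_of_mem_logDerivations (hA : IsArrangement A)
    (hcard : (A.card : F) ≠ 0) {k : ℕ} {θ : Fin n → MvPolynomial (Fin n) F}
    (hθ : θ ∈ logDerivations A) (hθk : ∀ j, (θ j).IsHomogeneous k)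
    (hθX : θ ∉ Submodule.span (MvPolynomial (Fin n) F) {X}) :
    ∃ φ : Fin n → MvPolynomial (Fin n) F, φ ≠ 0 ∧ (∀ j, (φ j).IsHomogeneous k) ∧
      applyDer φ (Qpoly A) = 0 := by
  have hQ := isHomogeneous_Qpoly hA
  obtain ⟨g, hg⟩ := Qpoly_dvd_applyDer_of_mem_logDerivations hθ
  have hgX (j : Fin n) : (g * X j).IsHomogeneous k := by
    have hmul : (Qpoly A * (g * X j)).IsHomogeneous (k + (A.card - 1) + 1) := by
      rw [← mul_assoc, ← hg]
      exact (isHomogeneous_applyDer hθk hQ).mul (isHomogeneous_X F j)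
    have hpos : 1 ≤ A.card := Nat.pos_of_ne_zero fun h => hcard (by rw [h, Nat.cast_zero])
    have hdeg : k + (A.card - 1) + 1 - A.card = k := by omega
    exact hdeg ▸ isHomogeneous_of_isHomogeneous_mul hQ (Qpoly_ne_zero hA) hmul
  refine ⟨θ + (C (-(A.card : F)⁻¹) * g) • X, fun h => hθX ?_, fun j => ?_, ?_⟩
  · rw [eq_neg_of_add_eq_zero_left h]
    exact neg_mem (Submodule.smul_mem _ _ (Submodule.mem_span_singleton_self X))
  · simp only [Pi.add_apply, Pi.smul_apply, smul_eq_mul, mul_assoc]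
    exact (hθk j).add ((hgX j).C_mul _)
  · have hC : C (-(A.card : F)⁻¹) * (A.card : MvPolynomial (Fin n) F) = -1 := by
      rw [← map_natCast C, ← C_mul, neg_mul, inv_mul_cancel₀ hcard, C_neg, C_1]
    rw [applyDer_add_left, applyDer_smul_left, applyDer_X hQ, hg, nsmul_eq_mul]
    linear_combination (g * Qpoly A) * hC

lemma notMem_span_X_of_applyDer_eq_zero (hA : IsArrangement A) (hcard : (A.card : F) ≠ 0)
    {θ : Fin n → MvPolynomial (Fin n) F} (hθ0 : θ ≠ 0) (hθ : applyDer θ (Qpoly A) = 0) :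
    θ ∉ Submodule.span (MvPolynomial (Fin n) F) {X} := by
  intro hmem
  obtain ⟨p, rfl⟩ := Submodule.mem_span_singleton.mp hmem
  have hcard' : (A.card : MvPolynomial (Fin n) F) ≠ 0 := by
    rw [← map_natCast C]
    exact C_ne_zero.mpr hcard
  rw [applyDer_smul_left, applyDer_X (isHomogeneous_Qpoly hA), nsmul_eq_mul] at hθ
  have hp : p = 0 := by simpa [hcard', Qpoly_ne_zero hA] using hθ
  exact hθ0 (by rw [hp, zero_smul])

lemma mdr_eq_sInf_logDerivations (hA : IsArrangement A) (hcard : (A.card : F) ≠ 0) :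
    mdr A = sInf {k | ∃ θ ∈ logDerivations A, (∀ j, (θ j).IsHomogeneous k) ∧
      θ ∉ Submodule.span (MvPolynomial (Fin n) F) {X}} := by
  unfold mdr
  congr 1
  ext k
  constructor
  · rintro ⟨θ, hθ0, hθk, hθ⟩
    exact ⟨θ, mem_logDerivations_of_Qpoly_dvd_applyDer hA (hθ ▸ dvd_zero _), hθk,
      notMem_span_X_of_applyDer_eq_zero hA hcard hθ0 hθ⟩
  · rintro ⟨θ, hθ, hθk, hθX⟩
    exact exists_jacobianRelation_of_mem_logDerivations hA hcard hθ hθk hθX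

lemma mdr_le_of_mem_logDerivations (hA : IsArrangement A) (hcard : (A.card : F) ≠ 0) {k : ℕ}
    {θ : Fin n → MvPolynomial (Fin n) F} (hθ : θ ∈ logDerivations A)
    (hθk : ∀ j, (θ j).IsHomogeneous k)
    (hθX : θ ∉ Submodule.span (MvPolynomial (Fin n) F) {X}) : mdr A ≤ k := by
  rw [mdr_eq_sInf_logDerivations hA hcard]
  exact Nat.sInf_le ⟨θ, hθ, hθk, hθX⟩

lemma exists_mem_logDerivations_mdr [Nontrivial (Fin n)] (hA : IsArrangement A)
    (hcard : (A.card : F) ≠ 0) :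
    ∃ θ ∈ logDerivations A, (∀ j, (θ j).IsHomogeneous (mdr A)) ∧
      θ ∉ Submodule.span (MvPolynomial (Fin n) F) {X} := by
  rw [mdr_eq_sInf_logDerivations hA hcard]
  refine Nat.sInf_mem (s := {k | ∃ θ ∈ logDerivations A, (∀ j, (θ j).IsHomogeneous k) ∧
    θ ∉ Submodule.span (MvPolynomial (Fin n) F) {X}}) ?_
  obtain ⟨i, j, hij⟩ := exists_pair_ne (Fin n)
  refine ⟨A.card, Qpoly A • Pi.single i 1, fun α hα => ?_, fun m => ?_, fun hmem => ?_⟩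
  · rw [applyDer_smul_left]
    exact (Finset.dvd_prod_of_mem id hα).mul_right _
  · rw [Pi.smul_apply, smul_eq_mul, Pi.single_apply, mul_ite, mul_one, mul_zero]
    split_ifs
    · exact isHomogeneous_Qpoly hA
    · exact isHomogeneous_zero _ _ _
  · obtain ⟨p, hp⟩ := Submodule.mem_span_singleton.mp hmem
    have hp0 : p = 0 := by simpa [hij.symm, X_ne_zero] using congrFun hp j
    exact Qpoly_ne_zero hA (by simpa [hp0] using (congrFun hp i).symm)

lemma mem_span_X_of_smul_mem_span_X [Nontrivial (Fin n)] (hH : Prime H)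
    {θ : Fin n → MvPolynomial (Fin n) F}
    (hθ : H • θ ∈ Submodule.span (MvPolynomial (Fin n) F) {X}) :
    θ ∈ Submodule.span (MvPolynomial (Fin n) F) {X} := by
  obtain ⟨p, hp⟩ := Submodule.mem_span_singleton.mp hθ
  have hpX (i : Fin n) : H ∣ p * X i := ⟨θ i, congrFun hp i⟩
  obtain ⟨q, rfl⟩ : H ∣ p := by
    by_contra hHp
    have hX (i : Fin n) : Associated H (X i) :=
      (hH.dvd_prime_iff_associated X_prime).mp ((hH.dvd_or_dvd (hpX i)).resolve_left hHp)
    obtain ⟨i, j, hij⟩ := exists_pair_ne (Fin n)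
    exact hij (X_dvd_X.mp ((hX i).symm.trans (hX j)).dvd)
  rw [mul_smul] at hp
  exact Submodule.mem_span_singleton.mpr ⟨q, smul_right_injective _ hH.ne_zero hp⟩

lemma mdr_insert_le [Nontrivial (Fin n)] (hA : IsArrangement A) (hcard : (A.card : F) ≠ 0)
    (hHA : IsArrangement (insert H A)) (hHcard : ((insert H A).card : F) ≠ 0) :
    mdr (insert H A) ≤ mdr A + 1 := by
  obtain ⟨θ, hθ, hθr, hθX⟩ := exists_mem_logDerivations_mdr hA hcard
  have hH := Finset.mem_insert_self H A
  refine mdr_le_of_mem_logDerivations hHA hHcard (smul_mem_logDerivations_insert hθ)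
    (fun j => ?_) (mt (mem_span_X_of_smul_mem_span_X (hHA.prime hH)) hθX)
  rw [Pi.smul_apply, smul_eq_mul, add_comm]
  exact (hHA.1 H hH).2.mul (hθr j)

end MinimalDegree

section Restriction

variable {F : Type*} [Field F] {n : ℕ} {A : Finset (MvPolynomial (Fin n) F)}
  {H : MvPolynomial (Fin n) F}

lemma exists_subset_card_eq_restCard (hA : IsArrangement A) (hH : H ∈ A) :
    ∃ T ⊆ A.erase H, T.card = restCard A H ∧
      (T : Set (MvPolynomial (Fin n) F)).Pairwise fun M N => N ∉ Submodule.span F {H, M} := by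
  let trace (L : MvPolynomial (Fin n) F) : Set (Fin n → F) := {v | eval v H = 0 ∧ eval v L = 0}
  obtain ⟨T, hTA, hinj, himage⟩ := Finset.exists_subset_injOn_image_eq_of_surjOn
    (f := trace) (A.erase H : Set (MvPolynomial (Fin n) F)) ((A.erase H).image trace)
    (by rw [Finset.coe_image]; exact Set.surjOn_image _ _)
  rw [Finset.coe_subset] at hTA
  refine ⟨T, hTA, ?_, fun M hM N hN hMN hspan => ?_⟩
  · rw [← Finset.card_image_of_injOn hinj, himage]
    rfl
  obtain ⟨a, b, rfl⟩ := Submodule.mem_span_pair.mp hspan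
  have hNA := Finset.mem_erase.mp (hTA hN)
  have hb : b ≠ 0 := by
    rintro rfl
    exact hA.2 _ hNA.2 H hH hNA.1 a (by rw [zero_smul, add_zero])
  refine hMN (hinj hM hN (Set.ext fun v => and_congr_right fun hv => ?_))
  simp [smul_eval, hv, hb]

lemma X_mul_sub_X_mul_mem_span_pair {α β γ : MvPolynomial (Fin n) F}
    {θ : Fin n → MvPolynomial (Fin n) F} (hα : applyDer θ α ∈ Ideal.span {α, β})
    (hβ : applyDer θ β ∈ Ideal.span {α, β})
    (hX : ∀ i, X i ∈ Submodule.span F {α, β, γ}) (i j : Fin n) :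
    X i * θ j - X j * θ i ∈ Ideal.span {α, β} := by
  have hmod (i : Fin n) : ∃ c : F,
      X i - c • γ ∈ Ideal.span {α, β} ∧ θ i - c • applyDer θ γ ∈ Ideal.span {α, β} := by
    obtain ⟨a, b, c, habc⟩ := Submodule.mem_span_triple.mp (hX i)
    have hθ : θ i = a • applyDer θ α + b • applyDer θ β + c • applyDer θ γ := by
      simp only [applyDer_eq_mkDerivation]
      rw [← Derivation.map_smul, ← Derivation.map_smul, ← Derivation.map_smul, ← map_add, ← map_add,
        habc, mkDerivation_X]
    refine ⟨c, ?_, ?_⟩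
    · rw [← habc, add_sub_cancel_right]
      exact add_mem (Submodule.smul_of_tower_mem _ a (Ideal.subset_span (by simp)))
        (Submodule.smul_of_tower_mem _ b (Ideal.subset_span (by simp)))
    · rw [hθ, add_sub_cancel_right]
      exact add_mem (Submodule.smul_of_tower_mem _ a hα) (Submodule.smul_of_tower_mem _ b hβ)
  obtain ⟨c, hXi, hθi⟩ := hmod i
  obtain ⟨d, hXj, hθj⟩ := hmod j
  have hcross : X i * θ j - X j * θ i =
      θ j * (X i - c • γ) + c • γ * (θ j - d • applyDer θ γ)
        - (θ i * (X j - d • γ) + d • γ * (θ i - c • applyDer θ γ)) := by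
    simp only [smul_eq_C_mul]
    ring
  rw [hcross]
  exact sub_mem (add_mem (Ideal.mul_mem_left _ _ hXi) (Ideal.mul_mem_left _ _ hθj))
    (add_mem (Ideal.mul_mem_left _ _ hXj) (Ideal.mul_mem_left _ _ hθi))

lemma dvd_sub_mul_X_of_dvd_X_mul_sub_X_mul {L q : MvPolynomial (Fin n) F}
    {θ : Fin n → MvPolynomial (Fin n) F} (hH : Prime H) (hL : L.IsHomogeneous 1) (hHL : ¬ H ∣ L)
    (hq : applyDer θ L = L * q) (hcross : ∀ i j, H ∣ X i * θ j - X j * θ i) (j : Fin n) :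
    H ∣ θ j - q * X j := by
  refine (hH.dvd_or_dvd ?_).resolve_left hHL
  have hEuler : ∑ i, X i * pderiv i L = L := by simpa using hL.sum_X_mul_pderiv
  have hsum : L * (θ j - q * X j) = ∑ i, pderiv i L * (X i * θ j - X j * θ i) := by
    calc L * (θ j - q * X j) = (∑ i, X i * pderiv i L) * θ j - X j * applyDer θ L := by
          rw [hEuler, hq]; ring
      _ = ∑ i, pderiv i L * (X i * θ j - X j * θ i) := by
          rw [applyDer, Finset.sum_mul, Finset.mul_sum, ← Finset.sum_sub_distrib]
          exact Finset.sum_congr rfl fun i _ => by ring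
  rw [hsum]
  exact Finset.dvd_sum fun i _ => (hcross i j).mul_left _

end Restriction

section Lines

variable {F : Type*} [Field F] {A : Finset (MvPolynomial (Fin 3) F)} {H : MvPolynomial (Fin 3) F}
  {θ : Fin 3 → MvPolynomial (Fin 3) F}

lemma X_mem_span_triple {α β γ : MvPolynomial (Fin 3) F} (hα : α.IsHomogeneous 1)
    (hβ : β.IsHomogeneous 1) (hγ : γ.IsHomogeneous 1) (hα0 : α ≠ 0)
    (hβα : β ∉ Submodule.span F {α}) (hγαβ : γ ∉ Submodule.span F {α, β}) (i : Fin 3) :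
    X i ∈ Submodule.span F {α, β, γ} := by
  have hli : LinearIndependent F ![γ, α, β] := by
    refine linearIndependent_finCons.mpr ⟨?_, ?_⟩
    · exact (LinearIndependent.pair_iff' hα0).mpr fun a ha =>
        hβα (Submodule.mem_span_singleton.mpr ⟨a, ha⟩)
    · simpa only [Matrix.range_cons_cons_empty] using hγαβ
  have hX := X_mem_span_of_linearIndependent (α := ![γ, α, β])
    (by simp [Fin.forall_fin_succ, hα, hβ, hγ]) hli i
  have hrange : Set.range ![γ, α, β] = {α, β, γ} := by
    rw [Matrix.range_cons, Matrix.range_cons_cons_empty, Set.singleton_union,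
      Set.insert_comm γ α, Set.pair_comm γ β]
  rwa [hrange] at hX

lemma dvd_X_mul_sub_X_mul (hA : IsArrangement A) (hH : H ∈ A) (hθ : θ ∈ logDerivations A)
    {r : ℕ} (hθr : ∀ j, (θ j).IsHomogeneous r) (hr : r + 2 ≤ restCard A H) (i j : Fin 3) :
    H ∣ X i * θ j - X j * θ i := by
  obtain ⟨T, hTA, hcard, hT⟩ := exists_subset_card_eq_restCard hA hH
  have hTA' (M) (hM : M ∈ T) : M ≠ H ∧ M ∈ A := Finset.mem_erase.mp (hTA hM)
  have hom {M} (hM : M ∈ T) : M.IsHomogeneous 1 := (hA.1 M (hTA' M hM).2).2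
  have hHom := (hA.1 H hH).2
  have hpair {M} (hM : M ∈ T) : ∀ β ∈ ({H, M} : Set (MvPolynomial (Fin 3) F)),
      β.IsHomogeneous 1 := by simp [hHom, hom hM]
  have hmem (M) (hM : M ∈ T) : X i * θ j - X j * θ i ∈ Ideal.span {H, M} := by
    obtain ⟨N, hN, hNM⟩ := Finset.exists_mem_ne (by omega : 1 < T.card) M
    exact X_mul_sub_X_mul_mem_span_pair (γ := N)
      (Ideal.mem_of_dvd _ (hθ H hH) (Ideal.subset_span (by simp)))
      (Ideal.mem_of_dvd _ (hθ M (hTA' M hM).2) (Ideal.subset_span (by simp)))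
      (X_mem_span_triple hHom (hom hM) (hom hN) (hA.1 H hH).1
        (hA.notMem_span_singleton hH (hTA' M hM).2 (hTA' M hM).1.symm) (hT hM hN hNM.symm)) i j
  have hprod : X i * θ j - X j * θ i ∈ Ideal.span {H, ∏ M ∈ T, M} :=
    mem_span_pair_prod (fun M hM => isPrime_span_of_isHomogeneous_one (hpair hM))
      (fun M hM N hN hMN => mt (mem_idealSpan_iff_mem_span (hpair hM) (hom hN)).mp (hT hM hN hMN))
      hmem
  have hTprod : (∏ M ∈ T, M).IsHomogeneous T.card := by
    simpa using IsHomogeneous.prod T id (fun _ => 1) fun M hM => hom hM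
  refine dvd_of_mem_span_pair_of_degree_lt hHom hTprod (k := 1 + r) ?_ (by omega) hprod
  exact ((isHomogeneous_X F i).mul (hθr j)).sub ((isHomogeneous_X F j).mul (hθr i))

lemma exists_eq_smul_X_add_smul (hA : IsArrangement A) (hH : H ∈ A) (hθ : θ ∈ logDerivations A)
    {r : ℕ} (hθr : ∀ j, (θ j).IsHomogeneous r) (hr : r + 2 ≤ restCard A H) :
    ∃ (q : MvPolynomial (Fin 3) F) (φ : Fin 3 → MvPolynomial (Fin 3) F),
      θ = q • X + H • φ ∧ ∀ j, (H * φ j).IsHomogeneous r := by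
  obtain ⟨L, hL⟩ : (A.erase H).Nonempty := by
    rw [Finset.nonempty_iff_ne_empty]
    intro hempty
    simp [restCard, hempty] at hr
  obtain ⟨hLH, hLA⟩ := Finset.mem_erase.mp hL
  obtain ⟨hL0, hLhom⟩ := hA.1 L hLA
  obtain ⟨q, hq⟩ := hθ L hLA
  have hqX (j : Fin 3) : (q * X j).IsHomogeneous r := by
    have hmul : (L * (q * X j)).IsHomogeneous (r + 1) := by
      rw [← mul_assoc, ← hq]
      exact (isHomogeneous_applyDer hθr hLhom).mul (isHomogeneous_X F j)
    exact isHomogeneous_of_isHomogeneous_mul hLhom hL0 hmul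
  choose φ hφ using dvd_sub_mul_X_of_dvd_X_mul_sub_X_mul (hA.prime hH) hLhom
    (hA.not_dvd hH hLA hLH.symm) hq (dvd_X_mul_sub_X_mul hA hH hθ hθr hr)
  refine ⟨q, φ, funext fun j => ?_, fun j => hφ j ▸ (hθr j).sub (hqX j)⟩
  rw [Pi.add_apply, Pi.smul_apply, Pi.smul_apply, smul_eq_mul, smul_eq_mul, ← hφ, add_sub_cancel]

lemma mdr_add_one_le_mdr_insert {A' : Finset (MvPolynomial (Fin 3) F)} (hH : H ∉ A')
    (hA' : IsArrangement A') (hcard' : (A'.card : F) ≠ 0) (hA : IsArrangement (insert H A'))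
    (hcard : ((insert H A').card : F) ≠ 0)
    (h : mdr (insert H A') + 2 ≤ restCard (insert H A') H) :
    mdr A' + 1 ≤ mdr (insert H A') := by
  have hHA := Finset.mem_insert_self H A'
  have hHhom := (hA.1 H hHA).2
  obtain ⟨θ, hθ, hθr, hθX⟩ := exists_mem_logDerivations_mdr hA hcard
  obtain ⟨q, φ, rfl, hHφ⟩ := exists_eq_smul_X_add_smul hA hHA hθ hθr h
  have hφX : φ ∉ Submodule.span (MvPolynomial (Fin 3) F) {X} := fun hφ =>
    hθX (add_mem (Submodule.mem_span_singleton.mpr ⟨q, rfl⟩) (Submodule.smul_mem _ H hφ))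
  have hφA : φ ∈ logDerivations A' := mem_logDerivations_of_smul_mem_insert hA hH <|
    (Submodule.add_mem_iff_right _ (Submodule.smul_mem _ q (X_mem_logDerivations hA))).mp hθ
  have hφr (j : Fin 3) : (φ j).IsHomogeneous (mdr (insert H A') - 1) :=
    isHomogeneous_of_isHomogeneous_mul hHhom (hA.1 H hHA).1 (hHφ j)
  have hle := mdr_le_of_mem_logDerivations hA' hcard' hφA hφr hφX
  obtain ⟨j, hj⟩ : ∃ j, φ j ≠ 0 := by
    by_contra! hφ0
    exact hφX ((funext hφ0 : φ = 0) ▸ zero_mem _)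
  have hpos : 1 ≤ mdr (insert H A') :=
    degree_le_of_isHomogeneous_mul hHhom (hHφ j) (mul_ne_zero (hA.1 H hHA).1 hj)
  omega

end Lines

theorem mdr_deletion_lines_general {F : Type*} [Field F] (A' : Finset (MvPolynomial (Fin 3) F))
    (H : MvPolynomial (Fin 3) F) (hH : H ∉ A') (hA : IsArrangement (insert H A'))
    (hcard' : (A'.card : F) ≠ 0) (hcard : ((insert H A').card : F) ≠ 0)
    (h : mdr (insert H A') + 2 ≤ restCard (insert H A') H) :
    mdr A' + 1 = mdr (insert H A') :=
  have hA' : IsArrangement A' := hA.mono (Finset.subset_insert H A')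
  (mdr_add_one_le_mdr_insert hH hA' hcard' hA hcard h).antisymm (mdr_insert_le hA' hcard' hA hcard)

/-- Deletion theorem for `r(A)` for line arrangements:
Let `A'` be a line arrangement in `P^2` and let `H` be a line not in `A'`, with
`A = A' ∪ {H}`, where both `A` and `A'` are essential. Set `r = r(A)`. If the number
of intersection points of `A` lying on `H` is at least `r + 2`, then `r(A') = r − 1`. -/
theorem mdr_deletion_lines (A' : Finset (MvPolynomial (Fin 3) K))
    (H : MvPolynomial (Fin 3) K) (hH : H ∉ A')
    (hA' : IsArrangement A') (hA : IsArrangement (insert H A'))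
    (hA'ess : IsEssential A') (hAess : IsEssential (insert H A'))
    (h : mdr (insert H A') + 2 ≤ restCard (insert H A') H) :
    mdr A' = mdr (insert H A') - 1 := by
  have hA'ne : A'.Nonempty := Finset.nonempty_iff_ne_empty.mpr fun h0 => by
    simpa using congrFun (hA'ess 1 (by simp [h0])) 0
  exact Nat.eq_sub_of_add_eq <| mdr_deletion_lines_general A' H hH hA
    (Nat.cast_ne_zero.mpr hA'ne.card_ne_zero)
    (Nat.cast_ne_zero.mpr (Finset.insert_nonempty H A').card_ne_zero) h
end
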